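/- The sequence k^{3+ξ}·f_k converges as k → ∞ to the positive limit L = (2+ξ)·Γ(m+3+ξ+δ) / ((2+ξ+m+δ)·Γ(m+δ)), where Γ denotes the real Gamma function; in particular, writing f_k = φ_k / k^{3+ξ}, the quantities φ_k tend to a positive limit depending only on m, δ, ξ as k → ∞. -/

import Mathlib

open Real Filter

/-- The sequence `(f_k)`: `f_k = 0` for `k < m`, `f_m = (2+ξ)/(2+ξ+m+δ)`, and
`f_k = f_{k-1}·(k-1+δ)/(2+ξ+k+δ)` for `k > m`. -/
noncomputable def f (ξ δ : ℝ) (m : ℕ) : ℕ → ℝ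
  | 0 => if m = 0 then (2 + ξ) / (2 + ξ + (m : ℝ) + δ) else 0
  | k + 1 =>
    if k + 1 < m then 0
    else if k + 1 = m then (2 + ξ) / (2 + ξ + (m : ℝ) + δ)
    else f ξ δ m k * ((k : ℝ) + δ) / (2 + ξ + ((k : ℝ) + 1) + δ)


lemma gamma_prod (s : ℝ) (hs : 0 < s) (n : ℕ) :
    Real.Gamma (s + n) = Real.Gamma s * ∏ j ∈ Finset.range n, (s + j) := by
  induction n with
  | zero => simp
  | succ n ih =>
    have h : s + (n : ℝ) ≠ 0 := by positivity
    rw [Finset.prod_range_succ, ← mul_assoc, ← ih]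
    push_cast
    rw [← add_assoc, Real.Gamma_add_one h]
    ring

lemma gammaSeq_eq (s : ℝ) (hs : 0 < s) (n : ℕ) :
    Real.GammaSeq s n =
      (n : ℝ) ^ s * n.factorial * Real.Gamma s / ((s + n) * Real.Gamma (s + n)) := by
  have h0 := (Real.Gamma_pos_of_pos hs).ne'
  have h1 : s + (n : ℝ) ≠ 0 := by positivity
  have h2 : ∏ j ∈ Finset.range n, (s + (j : ℝ)) ≠ 0 :=
    Finset.prod_ne_zero_iff.mpr fun j _ => by positivity
  rw [Real.GammaSeq, gamma_prod s hs, Finset.prod_range_succ]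
  field_simp

lemma f_closed (ξ δ : ℝ) (hξ : 0 < ξ) (hδ : 0 < δ) (m : ℕ) (hm : 1 ≤ m) (k : ℕ) (hk : m ≤ k) :
    f ξ δ m k = (2 + ξ) * Real.Gamma ((m : ℝ) + 3 + ξ + δ) /
        ((2 + ξ + (m : ℝ) + δ) * Real.Gamma ((m : ℝ) + δ)) *
        (Real.Gamma (δ + k) / Real.Gamma (3 + ξ + δ + k)) := by
  induction k, hk using Nat.le_induction with
  | base =>
    obtain ⟨p, rfl⟩ : ∃ p, m = p + 1 := ⟨m - 1, by omega⟩
    have e1 : ((p + 1 : ℕ) : ℝ) + 3 + ξ + δ = 3 + ξ + δ + ((p + 1 : ℕ) : ℝ) := by ring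
    have e2 : ((p + 1 : ℕ) : ℝ) + δ = δ + ((p + 1 : ℕ) : ℝ) := by ring
    have h1 := (Real.Gamma_pos_of_pos (s := 3 + ξ + δ + ((p + 1 : ℕ) : ℝ)) (by positivity)).ne'
    have h2 := (Real.Gamma_pos_of_pos (s := δ + ((p + 1 : ℕ) : ℝ)) (by positivity)).ne'
    rw [f, if_neg (by omega), if_pos rfl, e1, e2]
    field_simp
  | succ k hk ih =>
    have h1 := (Real.Gamma_pos_of_pos (s := 3 + ξ + δ + (k : ℝ)) (by positivity)).ne'
    have n1 : 3 + ξ + δ + (k : ℝ) ≠ 0 := by positivity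
    have n2 : δ + (k : ℝ) ≠ 0 := by positivity
    have e : 2 + ξ + ((k : ℝ) + 1) + δ = 3 + ξ + δ + k := by ring
    rw [f, if_neg (by omega), if_neg (by omega), ih, e]
    push_cast
    rw [← add_assoc, ← add_assoc, Real.Gamma_add_one n1, Real.Gamma_add_one n2, mul_div_assoc,
      mul_assoc]
    congr 1
    field_simp
    ring

/-- `k^(3+ξ)·f_k` converges, as `k → ∞`, to the positive limit
`L = (2+ξ)·Γ(m+3+ξ+δ)/((2+ξ+m+δ)·Γ(m+δ))`. -/
theorem f_asymptotics (ξ δ : ℝ) (hξ : 0 < ξ) (hδ : 0 < δ) (m : ℕ) (hm : 1 ≤ m) :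
    Tendsto (fun k : ℕ => (k : ℝ) ^ (3 + ξ) * f ξ δ m k) atTop
      (nhds ((2 + ξ) * Real.Gamma ((m : ℝ) + 3 + ξ + δ) /
        ((2 + ξ + (m : ℝ) + δ) * Real.Gamma ((m : ℝ) + δ)))) ∧
    0 < (2 + ξ) * Real.Gamma ((m : ℝ) + 3 + ξ + δ) /
        ((2 + ξ + (m : ℝ) + δ) * Real.Gamma ((m : ℝ) + δ)) := by
  constructor
  · have g1 := Real.Gamma_pos_of_pos hδ
    have hb : 0 < 3 + ξ + δ := by positivity
    have g2 := Real.Gamma_pos_of_pos hb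
    have t1 := (Real.GammaSeq_tendsto_Gamma (3 + ξ + δ)).div
      (Real.GammaSeq_tendsto_Gamma δ) g1.ne'
    have t2 : Tendsto (fun k : ℕ => 1 + (3 + ξ) / (δ + (k : ℝ))) atTop (nhds (1 + 0)) :=
      tendsto_const_nhds.add (Tendsto.const_div_atTop
        (tendsto_atTop_add_const_left _ _ tendsto_natCast_atTop_atTop) _)
    have t3 := ((t1.mul t2).mul_const (Real.Gamma δ / Real.Gamma (3 + ξ + δ))).const_mul
      ((2 + ξ) * Real.Gamma ((m : ℝ) + 3 + ξ + δ) /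
        ((2 + ξ + (m : ℝ) + δ) * Real.Gamma ((m : ℝ) + δ)))
    have e : Real.Gamma (3 + ξ + δ) / Real.Gamma δ * (1 + 0) *
        (Real.Gamma δ / Real.Gamma (3 + ξ + δ)) = 1 := by
      field_simp
      norm_num
    rw [e, mul_one] at t3
    refine t3.congr' ?_
    filter_upwards [eventually_ge_atTop m] with k hk
    have hk0 : (0 : ℝ) < k := by exact_mod_cast (by omega : 0 < k)
    have h1 := (Real.Gamma_pos_of_pos (s := 3 + ξ + δ + (k : ℝ)) (by positivity)).ne'
    have h2 := (Real.Gamma_pos_of_pos (s := δ + (k : ℝ)) (by positivity)).ne'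
    have h3 : (k.factorial : ℝ) ≠ 0 := by positivity
    have h4 : (k : ℝ) ^ δ ≠ 0 := by positivity
    have n1 : 3 + ξ + δ + (k : ℝ) ≠ 0 := by positivity
    have n2 : δ + (k : ℝ) ≠ 0 := by positivity
    rw [f_closed ξ δ hξ hδ m hm k hk, mul_left_comm ((k : ℝ) ^ (3 + ξ))]
    congr 1
    simp only [Pi.div_apply]
    have e3 : 1 + (3 + ξ) / (δ + (k : ℝ)) = (3 + ξ + δ + k) / (δ + k) := by
      field_simp
      ring
    rw [gammaSeq_eq _ hb, gammaSeq_eq _ hδ, e3, Real.rpow_add hk0 (3 + ξ) δ]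
    generalize (k : ℝ) ^ (3 + ξ) = A
    generalize (k : ℝ) ^ δ = B at *
    field_simp
  · have h1 := Real.Gamma_pos_of_pos (s := (m : ℝ) + 3 + ξ + δ) (by positivity)
    have h2 := Real.Gamma_pos_of_pos (s := (m : ℝ) + δ) (by positivity)
    positivity
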